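/- Let E be a finite-dimensional real inner product space of dimension at least 2, let x ∈ E be a nonzero vector, let j ≥ 2 be a natural number, and let A : E → E be a self-adjoint linear operator with A x = 0. Then there exists a j-multilinear map B from E^j to the space of linear endomorphisms of E such that the associated homogeneous polynomial map G : E → End(E), G(v) = B(v, v, …, v), satisfies: (i) G(v) is self-adjoint for every v ∈ E; (ii) G(v) v = 0 for every v ∈ E; and (iii) G(x) = A. -/

import Mathlib

/-!
Choose `a` with `β x a = 1`, where `β` is the metric, and put `P v u = β v a • u - β u a • v`, which
is linear in `v` and kills `u = v`. If `P' v` is the adjoint of `P v`, then `P' v * A * P v` is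
quadratic in `v`, self-adjoint and annihilates `v`; since `A x = 0`, it equals `A` at `v = x`.
Multiplying it by `(β v a) ^ (j - 2)` raises the degree to `j`.
-/

theorem exists_multilinearMap_diagonal_eq_pow_smul {R M N : Type*} [CommSemiring R]
    [AddCommMonoid M] [Module R M] [AddCommMonoid N] [Module R N]
    (f : M →ₗ[R] R) (L : M →ₗ[R] M →ₗ[R] N) (k : ℕ) :
    ∃ B : MultilinearMap R (fun _ : Fin (k + 2) => M) N,
      ∀ v, B (fun _ => v) = f v ^ k • L v v := by
  induction k with
  | zero =>
    let ofLinear := (MultilinearMap.ofSubsingletonₗ R R M N (0 : Fin 1)).toLinearMap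
    refine ⟨LinearMap.uncurryLeft (M := fun _ : Fin 2 => M) (ofLinear ∘ₗ L), fun v => ?_⟩
    simp [ofLinear, Fin.tail_def]
  | succ k ih =>
    obtain ⟨B, hB⟩ := ih
    refine ⟨LinearMap.uncurryLeft (M := fun _ : Fin (k + 3) => M) (f.smulRight B), fun v => ?_⟩
    simp [Fin.tail_def, hB, pow_succ', mul_smul]

theorem isSelfAdjoint_mul_mul_of_isAdjointPair {R M : Type*} [CommSemiring R] [AddCommMonoid M]
    [Module R M] {β : LinearMap.BilinForm R M} (hβ : β.IsSymm) {A P P' : Module.End R M}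
    (hA : β.IsSelfAdjoint A) (hP : β.IsAdjointPair β P P') : β.IsSelfAdjoint (P' * A * P) := by
  have hP' : β.IsAdjointPair β P' P := fun u w => by rw [hβ.eq, ← hP, hβ.eq]
  exact (hP'.mul hA).mul hP

section ContractWedge

variable {R M : Type*} [CommRing R] [AddCommGroup M] [Module R M]

/-- The contraction `u ↦ ι_f (v ∧ u) = f v • u - f u • v` of a wedge product by a linear form `f`,
as a linear function of `v`. -/
def contractWedge (f : M →ₗ[R] R) : M →ₗ[R] Module.End R M :=
  f.smulRight 1 - LinearMap.smulRightₗ f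

theorem contractWedge_apply (f : M →ₗ[R] R) (v u : M) :
    contractWedge f v u = f v • u - f u • v := by
  simp [contractWedge]

theorem contractWedge_self (f : M →ₗ[R] R) (v : M) : contractWedge f v v = 0 := by
  rw [contractWedge_apply, sub_self]

theorem mul_contractWedge_of_apply_eq_zero {f : M →ₗ[R] R} {x : M} (hfx : f x = 1)
    {A : Module.End R M} (hAx : A x = 0) : A * contractWedge f x = A := by
  ext u
  simp [contractWedge_apply, hfx, hAx]

/-- An explicit `β`-adjoint of `contractWedge f v` for the linear form `f = β · a`, as a linear
function of `v`. -/
def contractWedgeAdjoint (β : LinearMap.BilinForm R M) (a : M) : M →ₗ[R] Module.End R M :=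
  (β.flip a).smulRight 1 - LinearMap.smulRightₗ.flip a ∘ₗ β

theorem contractWedgeAdjoint_apply (β : LinearMap.BilinForm R M) (a v w : M) :
    contractWedgeAdjoint β a v w = β v a • w - β v w • a := by
  simp [contractWedgeAdjoint]

theorem isAdjointPair_contractWedge (β : LinearMap.BilinForm R M) (a v : M) :
    β.IsAdjointPair β (contractWedge (β.flip a) v) (contractWedgeAdjoint β a v) := fun u w => by
  simp [contractWedge_apply, contractWedgeAdjoint_apply, mul_comm]

theorem contractWedgeAdjoint_mul_of_apply_eq_zero {β : LinearMap.BilinForm R M} {a x : M}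
    (hxa : β x a = 1) {A : Module.End R M} (hA : β.IsSelfAdjoint A) (hAx : A x = 0) :
    contractWedgeAdjoint β a x * A = A := by
  ext w
  have hxA : β x (A w) = 0 := by rw [← hA, hAx, map_zero, LinearMap.zero_apply]
  simp [contractWedgeAdjoint_apply, hxa, hxA]

end ContractWedge

theorem exists_homogeneous_realizing_selfAdjoint_general
    {R M : Type*} [CommRing R] [AddCommGroup M] [Module R M]
    {β : LinearMap.BilinForm R M} (hβ : β.IsSymm) {a x : M} (hxa : β x a = 1)
    {j : ℕ} (hj : 2 ≤ j) {A : Module.End R M} (hA : β.IsSelfAdjoint A) (hAx : A x = 0) :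
    ∃ B : MultilinearMap R (fun _ : Fin j => M) (Module.End R M),
      (∀ v : M, β.IsSelfAdjoint (B (fun _ => v))) ∧
      (∀ v : M, B (fun _ => v) v = 0) ∧
      B (fun _ => x) = A := by
  obtain ⟨k, rfl⟩ := Nat.exists_eq_add_of_le' hj
  let P := contractWedge (β.flip a)
  let P' := contractWedgeAdjoint β a
  let L := (LinearMap.mul R (Module.End R M)).compl₁₂ (LinearMap.mulRight R A ∘ₗ P') P
  obtain ⟨B, hB⟩ : ∃ B : MultilinearMap R (fun _ : Fin (k + 2) => M) (Module.End R M),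
      ∀ v, B (fun _ => v) = β v a ^ k • (P' v * A * P v) :=
    exists_multilinearMap_diagonal_eq_pow_smul (β.flip a) L k
  refine ⟨B, fun v => ?selfAdjoint, fun v => ?annihilates, ?value⟩
  case selfAdjoint =>
    rw [hB]
    exact (isSelfAdjoint_mul_mul_of_isAdjointPair hβ hA (isAdjointPair_contractWedge β a v)).smul _
  case annihilates =>
    simp [hB, P, contractWedge_self]
  case value =>
    rw [hB, hxa, one_pow, one_smul, contractWedgeAdjoint_mul_of_apply_eq_zero hxa hA hAx]
    exact mul_contractWedge_of_apply_eq_zero (f := β.flip a) hxa hAx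

/-- Claim A.2: given a nonzero vector `x` and a self-adjoint operator `A` with `A x = 0`,
for any degree `j ≥ 2` there is a `j`-multilinear map `B` whose associated homogeneous
polynomial map `G v = B (v, …, v)` takes self-adjoint values, satisfies `G v v = 0` for all
`v`, and realizes the prescribed value `G x = A`. -/
theorem exists_homogeneous_realizing_selfAdjoint
    {E : Type*} [NormedAddCommGroup E] [InnerProductSpace ℝ E] [FiniteDimensional ℝ E]
    (hdim : 2 ≤ Module.finrank ℝ E)
    (x : E) (hx : x ≠ 0) (j : ℕ) (hj : 2 ≤ j)
    (A : E →ₗ[ℝ] E) (hA : A.IsSymmetric) (hAx : A x = 0) :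
    ∃ B : MultilinearMap ℝ (fun _ : Fin j => E) (E →ₗ[ℝ] E),
      (∀ v : E, (B (fun _ => v)).IsSymmetric) ∧
      (∀ v : E, B (fun _ => v) v = 0) ∧
      B (fun _ => x) = A := by
  have hxa : innerₗ E x ((inner ℝ x x)⁻¹ • x) = 1 := by simp [hx]
  exact exists_homogeneous_realizing_selfAdjoint_general ⟨isSymm_inner.eq⟩ hxa hj hA hAx
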